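/- Let p ≥ 5 be a prime such that −2 is a quadratic nonresidue modulo p. Then for all n, α ≥ 0 with p ∤ n, T_2(9 p^{2α+1} n + (9 p^{2α+2} − 1)/8) ≡ 0 (mod 6). -/

import Mathlib

noncomputable def Tcount (ℓ k n : ℕ) : ℕ :=
  Nat.card {f : Fin k → Σ m : ℕ, Nat.Partition m //
    (∑ i, (f i).1) = n ∧ ∀ i, ∀ p ∈ (f i).2.parts, ¬ ℓ ∣ p}

/-!
Let `f` be the generating function of `ℓ`-regular partitions, so that `Tcount ℓ k` has generating
function `f ^ k`. If `q` is prime, `f ^ q` is modulo `q` a power series in `X ^ q`, so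
`q ∣ Tcount ℓ q N` unless `q ∣ N`; this gives divisibility by `3`.

For `ℓ = 2`, Euler's theorem gives `f = ∏ (1 + X ^ i) ≡ ∏ (1 - X ^ i)` modulo `2`, which is the
pentagonal series. Hence `f ^ 3 ≡ f(X ^ 2) f(X)`, and `Tcount 2 3 N` can only be odd if `N` is twice
a pentagonal number plus a pentagonal number. Completing squares, `24 N + 3 = x ^ 2 + 2 y ^ 2`. When
`-2` is a nonresidue modulo `p`, the form `x ^ 2 + 2 y ^ 2` is anisotropic modulo `p`, and so by
descent represents only integers with even `p`-adic valuation.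
-/

section Counting

variable {ι μ : Type*} [Fintype ι] [DecidableEq ι] [AddCommMonoid μ] [DecidableEq μ]
  [Finset.HasAntidiagonal μ] {B : ι → μ → Type*}

/-- Families of graded objects of total degree `N`, the `i`-th one lying in `S i`, sorted by their
tuples of degrees. The tuples are finitely supported functions because these are what
`PowerSeries.coeff_prod` sums over. -/
noncomputable def piSigmaEquivSigmaFinsuppAntidiag (S : ∀ i m, Finset (B i m)) (N : μ) :
    {f : ∀ i, Σ m, B i m // ∑ i, (f i).1 = N ∧ ∀ i, (f i).2 ∈ S i (f i).1} ≃
      Σ l : Finset.finsuppAntidiag (Finset.univ : Finset ι) N, ∀ i, S i (l.1 i) where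
  toFun f := ⟨⟨Finsupp.equivFunOnFinite.symm fun i ↦ (f.1 i).1, by
    simp [Finset.mem_finsuppAntidiag, f.2.1]⟩, fun i ↦ ⟨(f.1 i).2, f.2.2 i⟩⟩
  invFun g := ⟨fun i ↦ ⟨g.1.1 i, (g.2 i).1⟩,
    (Finset.mem_finsuppAntidiag.1 g.1.2).1, fun i ↦ (g.2 i).2⟩
  left_inv _ := rfl
  right_inv := by
    rintro ⟨⟨l, hl⟩, g⟩
    obtain ⟨d, rfl⟩ := Finsupp.equivFunOnFinite.symm.surjective l
    rfl

theorem card_piSigma_sum_fst_eq (S : ∀ i m, Finset (B i m)) (N : μ) :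
    Nat.card {f : ∀ i, Σ m, B i m // ∑ i, (f i).1 = N ∧ ∀ i, (f i).2 ∈ S i (f i).1} =
      ∑ l ∈ Finset.finsuppAntidiag (Finset.univ : Finset ι) N, ∏ i, (S i (l i)).card := by
  rw [Nat.card_congr (piSigmaEquivSigmaFinsuppAntidiag S N), Nat.card_sigma,
    ← Finset.sum_coe_sort (Finset.finsuppAntidiag Finset.univ N)]
  simp only [Nat.card_pi, Nat.card_eq_finsetCard]

end Counting

open PowerSeries

/-- The generating function of the `ℓ`-regular partitions, those with no part divisible by `ℓ`. -/
noncomputable def regularSeries (R : Type*) [Semiring R] (ℓ : ℕ) : R⟦X⟧ :=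
  PowerSeries.mk fun n ↦ ((Nat.Partition.restricted n (¬ ℓ ∣ ·)).card : R)

theorem natCast_Tcount (R : Type*) [CommSemiring R] (ℓ k N : ℕ) :
    (Tcount ℓ k N : R) = coeff N (regularSeries R ℓ ^ k) := by
  have hcard := card_piSigma_sum_fst_eq (ι := Fin k)
    (fun _ m ↦ Nat.Partition.restricted m (¬ ℓ ∣ ·)) N
  simp only [Nat.Partition.restricted, Finset.mem_filter_univ] at hcard
  have hpow : regularSeries R ℓ ^ k = ∏ _i : Fin k, regularSeries R ℓ := by simp
  rw [Tcount, hcard, hpow, coeff_prod]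
  simp [regularSeries, Nat.Partition.restricted]

section Frobenius

variable {R : Type*} [CommRing R] {p : ℕ} [ExpChar R p]

theorem map_frobenius_powerSeries_expand (f : R⟦X⟧) :
    (expand p (expChar_ne_zero R p) f).map (frobenius R p) = f ^ p :=
  MvPowerSeries.map_frobenius_expand p (expChar_ne_zero R p)

theorem coeff_pow_expChar_of_not_dvd (f : R⟦X⟧) {n : ℕ} (hn : ¬ p ∣ n) :
    coeff n (f ^ p) = 0 := by
  rw [← map_frobenius_powerSeries_expand, coeff_map, coeff_expand_of_not_dvd _ _ _ hn, map_zero]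

theorem coeff_pow_expChar_mul (f : R⟦X⟧) (n : ℕ) : coeff (p * n) (f ^ p) = coeff n f ^ p := by
  rw [← map_frobenius_powerSeries_expand, coeff_map, coeff_expand_mul, frobenius_def]

theorem exists_coeff_ne_zero_of_coeff_pow_expChar_mul_ne_zero {f g : R⟦X⟧} {N : ℕ}
    (h : coeff N (f ^ p * g) ≠ 0) :
    ∃ a b, p * a + b = N ∧ coeff a f ≠ 0 ∧ coeff b g ≠ 0 := by
  rw [coeff_mul] at h
  obtain ⟨⟨c, b⟩, hcb, hne⟩ := Finset.exists_ne_zero_of_sum_ne_zero h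
  have hc : coeff c (f ^ p) ≠ 0 := left_ne_zero_of_mul hne
  obtain ⟨a, rfl⟩ : p ∣ c := not_imp_comm.1 (coeff_pow_expChar_of_not_dvd f) hc
  rw [coeff_pow_expChar_mul] at hc
  exact ⟨a, b, Finset.HasAntidiagonal.mem_antidiagonal.1 hcb, ne_zero_pow (expChar_ne_zero R p) hc,
    right_ne_zero_of_mul hne⟩

end Frobenius

theorem prime_dvd_Tcount {q : ℕ} (hq : q.Prime) (ℓ : ℕ) {N : ℕ} (hN : ¬ q ∣ N) :
    q ∣ Tcount ℓ q N := by
  have : Fact q.Prime := ⟨hq⟩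
  rw [← ZMod.natCast_eq_zero_iff, natCast_Tcount, coeff_pow_expChar_of_not_dvd _ hN]

open PowerSeries.WithPiTopology in
theorem regularSeries_two_eq_pentagonalSeries (R : Type*) [CommRing R] [NoZeroDivisors R]
    [CharP R 2] : regularSeries R 2 = pentagonalSeries R := by
  let _ : TopologicalSpace R := ⊥
  have _ : DiscreteTopology R := ⟨rfl⟩
  have two_eq_zero : (2 : R⟦X⟧) = 0 := by
    rw [← map_ofNat (C (R := R)) 2, CharTwo.two_eq_zero, map_zero]
  calc regularSeries R 2
      = ∏' i, ∑ j ∈ Finset.range 2, X ^ ((i + 1) * j) := by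
        rw [regularSeries,
          Nat.Partition.powerSeriesMk_card_restricted_eq_powerSeriesMk_card_countRestricted
            R two_pos,
          Nat.Partition.powerSeriesMk_card_countRestricted_eq_tprod R two_pos]
    _ = ∏' i, (1 - X ^ (i + 1)) := by
        refine tprod_congr fun i ↦ ?_
        simp only [Finset.sum_range_succ, Finset.sum_range_zero, mul_zero, pow_zero, zero_add,
          mul_one]
        linear_combination X ^ (i + 1) * two_eq_zero
    _ = pentagonalSeries R := tprod_one_sub_X_pow R

theorem exists_pentagonal_of_odd_Tcount {N : ℕ} (h : Odd (Tcount 2 3 N)) :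
    ∃ k l : ℤ, 2 * pentagonal k + pentagonal l = N := by
  have hne : coeff N (pentagonalSeries (ZMod 2) ^ 2 * pentagonalSeries (ZMod 2)) ≠ 0 := by
    rw [← pow_succ, ← regularSeries_two_eq_pentagonalSeries, ← natCast_Tcount]
    exact ZMod.natCast_ne_zero_iff_odd.2 h
  obtain ⟨a, b, rfl, ha, hb⟩ := exists_coeff_ne_zero_of_coeff_pow_expChar_mul_ne_zero hne
  obtain ⟨k, rfl⟩ := not_imp_comm.1 (coeff_pentagonalSeries_eq_zero _) ha
  obtain ⟨l, rfl⟩ := not_imp_comm.1 (coeff_pentagonalSeries_eq_zero _) hb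
  exact ⟨k, l, rfl⟩

theorem twentyFour_mul_pentagonal_add_one (k : ℤ) :
    24 * (pentagonal k : ℤ) + 1 = (6 * k - 1) ^ 2 := by
  linear_combination 12 * two_mul_natCast_pentagonal k

theorem exists_sq_add_two_mul_sq_of_odd_Tcount {N : ℕ} (h : Odd (Tcount 2 3 N)) :
    ∃ x y : ℤ, x ^ 2 + 2 * y ^ 2 = 24 * N + 3 := by
  obtain ⟨k, l, rfl⟩ := exists_pentagonal_of_odd_Tcount h
  refine ⟨6 * l - 1, 6 * k - 1, ?_⟩
  rw [← twentyFour_mul_pentagonal_add_one, ← twentyFour_mul_pentagonal_add_one]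
  push_cast
  ring

section Nonresidue

variable {p : ℕ} [Fact p.Prime]

theorem sq_sub_mul_sq_ne_odd_pow_mul {a m : ℤ} (ha : legendreSym p a = -1) (hm : ¬ (p : ℤ) ∣ m)
    (α : ℕ) (x y : ℤ) : x ^ 2 - a * y ^ 2 ≠ (p : ℤ) ^ (2 * α + 1) * m := by
  have hp0 : (p : ℤ) ≠ 0 := mod_cast (Fact.out : p.Prime).ne_zero
  have dvd_both {α : ℕ} {x y : ℤ} (h : x ^ 2 - a * y ^ 2 = (p : ℤ) ^ (2 * α + 1) * m) :
      (p : ℤ) ∣ x ∧ (p : ℤ) ∣ y :=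
    legendreSym.prime_dvd_of_eq_neg_one ha
      (h ▸ (dvd_pow_self _ (Nat.succ_ne_zero _)).mul_right m)
  intro h
  induction α generalizing x y with
  | zero =>
    obtain ⟨⟨u, rfl⟩, ⟨v, rfl⟩⟩ := dvd_both h
    refine hm ⟨u ^ 2 - a * v ^ 2, mul_left_cancel₀ hp0 ?_⟩
    linear_combination -h
  | succ α ih =>
    obtain ⟨⟨u, rfl⟩, ⟨v, rfl⟩⟩ := dvd_both h
    refine ih u v (mul_left_cancel₀ (pow_ne_zero 2 hp0) ?_)
    linear_combination h

theorem even_Tcount_of_eq_odd_pow_mul (hp : legendreSym p (-2) = -1) {N α : ℕ} {m : ℤ}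
    (hm : ¬ (p : ℤ) ∣ m) (hN : 24 * (N : ℤ) + 3 = (p : ℤ) ^ (2 * α + 1) * m) :
    Even (Tcount 2 3 N) := by
  by_contra hodd
  obtain ⟨x, y, hxy⟩ := exists_sq_add_two_mul_sq_of_odd_Tcount (Nat.not_even_iff_odd.1 hodd)
  refine sq_sub_mul_sq_ne_odd_pow_mul hp hm α x y ?_
  linear_combination hxy + hN

end Nonresidue

theorem eight_mul_index_add_one {p : ℕ} (hp : Odd p) (n α : ℕ) :
    8 * (9 * p ^ (2 * α + 1) * n + (9 * p ^ (2 * α + 2) - 1) / 8) + 1 =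
      9 * p ^ (2 * α + 1) * (8 * n + p) := by
  have hsq : 9 * p ^ (2 * α + 2) = (3 * p ^ (α + 1)) ^ 2 := by ring
  have hdvd : 8 ∣ 9 * p ^ (2 * α + 2) - 1 :=
    hsq ▸ Nat.eight_dvd_sq_sub_one_of_odd ((by decide : Odd 3).mul hp.pow)
  have hpos : 0 < 9 * p ^ (2 * α + 2) := by have := hp.pos; positivity
  rw [mul_add, Nat.mul_div_cancel' hdvd, add_assoc, Nat.sub_add_cancel hpos]
  ring

theorem not_dvd_twentySeven_mul {p n : ℕ} (hp : p.Prime) (hp5 : 5 ≤ p) (hn : ¬ p ∣ n) :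
    ¬ p ∣ 27 * (8 * n + p) := by
  have hp2 : ¬ p ∣ 2 := Nat.not_dvd_of_pos_of_lt (by lia) (by lia)
  have hp3 : ¬ p ∣ 3 := Nat.not_dvd_of_pos_of_lt (by lia) (by lia)
  rw [hp.dvd_mul, Nat.dvd_add_self_right, hp.dvd_mul, (by norm_num : 27 = 3 ^ 3),
    (by norm_num : 8 = 2 ^ 3), hp.prime.dvd_pow_iff_dvd three_ne_zero,
    hp.prime.dvd_pow_iff_dvd three_ne_zero]
  tauto

theorem stmt13 (p : ℕ) (hp : p.Prime) (hp5 : 5 ≤ p)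
    (hqnr : ¬ IsSquare ((-2 : ZMod p))) (n α : ℕ) (hn : ¬ p ∣ n) :
    6 ∣ Tcount 2 3 (9 * p ^ (2 * α + 1) * n + (9 * p ^ (2 * α + 2) - 1) / 8) := by
  have : Fact p.Prime := ⟨hp⟩
  have hN := eight_mul_index_add_one (hp.odd_of_ne_two (by lia)) n α
  set N := 9 * p ^ (2 * α + 1) * n + (9 * p ^ (2 * α + 2) - 1) / 8
  have three_dvd : 3 ∣ Tcount 2 3 N := by
    refine prime_dvd_Tcount Nat.prime_three 2 fun h ↦ ?_
    rw [mul_assoc] at hN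
    lia
  have two_dvd : 2 ∣ Tcount 2 3 N := by
    have hleg : legendreSym p (-2) = -1 := (legendreSym.eq_neg_one_iff p).2 (mod_cast hqnr)
    have hm : ¬ (p : ℤ) ∣ 27 * (8 * n + p) := mod_cast not_dvd_twentySeven_mul hp hp5 hn
    refine (even_Tcount_of_eq_odd_pow_mul hleg (α := α) hm ?_).two_dvd
    zify at hN
    linear_combination 3 * hN
  exact Nat.Coprime.mul_dvd_of_dvd_of_dvd (by norm_num) two_dvd three_dvd
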